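/- arXiv:2102.02730 — 2 statements merged into one kernel-verified Lean document; each statement's English description precedes it below -/
import Mathlib

section
/- Define, for an n×n real matrix X, the vectorization vec X : (Fin n × Fin n) → ℝ by vec X (j, i) = X i j. Let T be an invertible n×n real matrix, let λ : Fin n → ℝ with λ ℓ ≠ 0 for all ℓ, let Λ = diagonal λ, and set A = T * Λ * T⁻¹. Then for any m ∈ ℕ, any family H : Fin m → Matrix (Fin n) (Fin n) ℝ, and any n×n real matrix C: vec (C - ∑ i, H i * C * (A⁻¹ ^ (i+1))) = (((T⁻¹)ᵀ ⊗ₖ 1) * (1 - ∑ i, (Λ⁻¹ ^ (i+1) ⊗ₖ H i)) * (Tᵀ ⊗ₖ 1)) *ᵥ (vec C). -/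
open Matrix Kronecker

/-- Column-major vectorization of an `n × n` matrix. -/
def vec {n : ℕ} (X : Matrix (Fin n) (Fin n) ℝ) : (Fin n × Fin n) → ℝ :=
  fun ji => X ji.2 ji.1

theorem stmt_8 (n : ℕ)
    (T : Matrix (Fin n) (Fin n) ℝ) (hT : IsUnit T.det)
    (lam : Fin n → ℝ) (hlam : ∀ ℓ, lam ℓ ≠ 0)
    (Λ A : Matrix (Fin n) (Fin n) ℝ)
    (hΛ : Λ = Matrix.diagonal lam)
    (hA : A = T * Λ * T⁻¹)
    (m : ℕ) (H : Fin m → Matrix (Fin n) (Fin n) ℝ)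
    (C : Matrix (Fin n) (Fin n) ℝ) :
    _root_.vec (C - ∑ i : Fin m, H i * C * (A⁻¹ ^ ((i : ℕ) + 1)))
      = (((T⁻¹)ᵀ ⊗ₖ (1 : Matrix (Fin n) (Fin n) ℝ))
          * ((1 : Matrix (Fin n × Fin n) (Fin n × Fin n) ℝ)
              - ∑ i : Fin m, ((Λ⁻¹ ^ ((i : ℕ) + 1)) ⊗ₖ H i))
          * (Tᵀ ⊗ₖ (1 : Matrix (Fin n) (Fin n) ℝ))) *ᵥ (_root_.vec C) := by
  have hT1 : T * T⁻¹ = 1 := Matrix.mul_nonsing_inv T hT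
  have hT2 : T⁻¹ * T = 1 := Matrix.nonsing_inv_mul T hT
  have hAinv : A⁻¹ = T * Λ⁻¹ * T⁻¹ := by
    rw [hA, Matrix.mul_inv_rev, Matrix.mul_inv_rev, Matrix.nonsing_inv_nonsing_inv T hT,
      Matrix.mul_assoc]
  have hpow : ∀ k : ℕ, A⁻¹ ^ k = T * Λ⁻¹ ^ k * T⁻¹ := by
    intro k
    induction k with
    | zero => simp [hT1]
    | succ k ih =>
      rw [pow_succ, ih, hAinv, pow_succ]
      calc T * Λ⁻¹ ^ k * T⁻¹ * (T * Λ⁻¹ * T⁻¹)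
          = T * Λ⁻¹ ^ k * (T⁻¹ * T) * Λ⁻¹ * T⁻¹ := by simp only [Matrix.mul_assoc]
        _ = _ := by rw [hT2]; simp only [Matrix.mul_assoc, Matrix.one_mul]
  have hΛt : ∀ k : ℕ, (Λ⁻¹ ^ k)ᵀ = Λ⁻¹ ^ k := by
    intro k
    rw [Matrix.transpose_pow, Matrix.transpose_nonsing_inv, hΛ, Matrix.diagonal_transpose]
  change Matrix.vec _ = _ *ᵥ Matrix.vec C
  rw [← Matrix.mulVec_mulVec, ← Matrix.mulVec_mulVec, Matrix.kronecker_mulVec_vec,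
    Matrix.sub_mulVec, Matrix.one_mulVec, Matrix.sum_mulVec]
  simp only [Matrix.kronecker_mulVec_vec, hΛt]
  rw [← Matrix.vec_sum, ← Matrix.vec_sub, Matrix.kronecker_mulVec_vec]
  congr 1
  simp only [Matrix.transpose_transpose, Matrix.one_mul, Matrix.sub_mul, Matrix.sum_mul, hpow,
    Matrix.mul_assoc, hT1, Matrix.mul_one]
end

section
/- Let n ≥ 1, let a : Fin n → ℝ with a ℓ ≠ 0 for all ℓ, and let f : Fin p → Fin n → ℝ and g : Fin q → Fin n → ℝ. Assume that for all ℓ, m : Fin n, 1 - ∑ i, f i m * (a ℓ)^{-(i+1)} ≠ 0. Set Λ = diagonal a, F i = diagonal (f i), G j = diagonal (g j), M₁ := 1 - ∑ i, (Λ⁻¹ ^ (i+1) ⊗ₖ F i), and M₂ := 1 + ∑ j, (Λ⁻¹ ^ (j+1) ⊗ₖ G j). Define vec X : (Fin n × Fin n) → ℝ by vec X (j, i) = X i j. Then M₁ is invertible, and (M₂ * M₁⁻¹) *ᵥ (vec 1) = vec (diagonal c), where c ℓ := (1 + ∑ j, g j ℓ * (a ℓ)^{-(j+1)}) / (1 -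 ∑ i, f i ℓ * (a ℓ)^{-(i+1)}); moreover, for any P : Fin n → ℝ, the trace of (diagonal c) * (diagonal P) * (diagonal c)ᵀ equals ∑ ℓ, (c ℓ)^2 * P ℓ. -/
open Matrix Kronecker

theorem stmt_9 (n : ℕ) (hn : 1 ≤ n) (p q : ℕ)
    (a : Fin n → ℝ) (ha : ∀ ℓ, a ℓ ≠ 0)
    (f : Fin p → Fin n → ℝ) (g : Fin q → Fin n → ℝ)
    (hf : ∀ ℓ m : Fin n,
      1 - ∑ i : Fin p, f i m * ((a ℓ)⁻¹) ^ ((i : ℕ) + 1) ≠ 0)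
    (Λ : Matrix (Fin n) (Fin n) ℝ) (hΛ : Λ = Matrix.diagonal a)
    (F : Fin p → Matrix (Fin n) (Fin n) ℝ) (hF : ∀ i, F i = Matrix.diagonal (f i))
    (G : Fin q → Matrix (Fin n) (Fin n) ℝ) (hG : ∀ j, G j = Matrix.diagonal (g j))
    (M₁ M₂ : Matrix (Fin n × Fin n) (Fin n × Fin n) ℝ)
    (hM₁ : M₁ = 1 - ∑ i : Fin p, ((Λ⁻¹ ^ ((i : ℕ) + 1)) ⊗ₖ F i))
    (hM₂ : M₂ = 1 + ∑ j : Fin q, ((Λ⁻¹ ^ ((j : ℕ) + 1)) ⊗ₖ G j))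
    (c : Fin n → ℝ)
    (hc : ∀ ℓ, c ℓ = (1 + ∑ j : Fin q, g j ℓ * ((a ℓ)⁻¹) ^ ((j : ℕ) + 1))
                      / (1 - ∑ i : Fin p, f i ℓ * ((a ℓ)⁻¹) ^ ((i : ℕ) + 1))) :
    IsUnit M₁.det ∧
      (M₂ * M₁⁻¹) *ᵥ (_root_.vec 1) = _root_.vec (Matrix.diagonal c) ∧
      ∀ P : Fin n → ℝ,
        ((Matrix.diagonal c) * (Matrix.diagonal P) * (Matrix.diagonal c)ᵀ).trace
          = ∑ ℓ, (c ℓ) ^ 2 * P ℓ := by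
  have hΛi : Λ⁻¹ = Matrix.diagonal (fun ℓ => (a ℓ)⁻¹) := by
    subst hΛ
    apply Matrix.inv_eq_right_inv
    rw [Matrix.diagonal_mul_diagonal, ← Matrix.diagonal_one]
    congr 1
    funext ℓ
    exact mul_inv_cancel₀ (ha ℓ)
  have key : ∀ (r : ℕ) (h : Fin r → Fin n → ℝ),
      (∑ i : Fin r, ((Λ⁻¹ ^ ((i : ℕ) + 1)) ⊗ₖ Matrix.diagonal (h i)))
        = Matrix.diagonal (fun x : Fin n × Fin n =>
            ∑ i : Fin r, h i x.2 * ((a x.1)⁻¹) ^ ((i : ℕ) + 1)) := by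
    intro r h
    ext x y
    rw [Matrix.sum_apply, Matrix.diagonal_apply]
    simp only [hΛi, Matrix.diagonal_pow, Matrix.diagonal_kronecker_diagonal,
      Matrix.diagonal_apply]
    split_ifs with hxy
    · exact Finset.sum_congr rfl fun i _ => by simp [mul_comm]
    · simp
  have h1 : M₁ = Matrix.diagonal (fun x : Fin n × Fin n =>
      1 - ∑ i : Fin p, f i x.2 * ((a x.1)⁻¹) ^ ((i : ℕ) + 1)) := by
    rw [hM₁]
    simp only [hF]
    rw [key, ← Matrix.diagonal_one, Matrix.diagonal_sub]
  have h2 : M₂ = Matrix.diagonal (fun x : Fin n × Fin n =>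
      1 + ∑ j : Fin q, g j x.2 * ((a x.1)⁻¹) ^ ((j : ℕ) + 1)) := by
    rw [hM₂]
    simp only [hG]
    rw [key, ← Matrix.diagonal_one, Matrix.diagonal_add]
  have h1i : M₁⁻¹ = Matrix.diagonal (fun x : Fin n × Fin n =>
      (1 - ∑ i : Fin p, f i x.2 * ((a x.1)⁻¹) ^ ((i : ℕ) + 1))⁻¹) := by
    rw [h1]
    apply Matrix.inv_eq_right_inv
    rw [Matrix.diagonal_mul_diagonal, ← Matrix.diagonal_one]
    congr 1
    funext x
    exact mul_inv_cancel₀ (hf x.1 x.2)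
  refine ⟨?_, ?_, ?_⟩
  · rw [h1, Matrix.det_diagonal, isUnit_iff_ne_zero]
    exact Finset.prod_ne_zero_iff.mpr fun x _ => hf x.1 x.2
  · rw [h1i, h2, Matrix.diagonal_mul_diagonal]
    funext x
    obtain ⟨j, i⟩ := x
    rw [Matrix.mulVec_diagonal]
    simp only [_root_.vec, Matrix.one_apply, Matrix.diagonal_apply]
    split_ifs with hij
    · subst hij
      rw [hc, mul_one, div_eq_mul_inv]
    · simp
  · intro P
    rw [Matrix.diagonal_transpose, Matrix.diagonal_mul_diagonal,
      Matrix.diagonal_mul_diagonal, Matrix.trace_diagonal]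
    exact Finset.sum_congr rfl fun ℓ _ => by ring
end
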